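/- Second-order stationarity measure bound at the updated point: let θ, h, v ∈ E, let r* ≥ 0, let M ≥ 4ρ, and let U : E → E be a continuous linear map with ⟨U w, w⟩ ≤ (M/2)·r*·‖w‖² for all w ∈ E; set g_m = v + U h − (M/2)·‖h‖·h. Then μ(θ + h) ≤ 9·( M³·ρ^{−3/2}·‖h‖³ + M^{3/2}·ρ^{−3/2}·‖∇f(θ) − v‖^{3/2} + ρ^{−3/2}·‖∇²f(θ) − U‖³ + M^{3/2}·ρ^{−3/2}·‖g_m‖^{3/2} + M³·ρ^{−3/2}·|‖h‖ − r*|³ ). -/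

import Mathlib

open scoped RealInnerProductSpace

/-!
Taylor's formula for the gradient and the definition of `g_m` give
`‖∇f(θ + h)‖ ≤ (ρ + M)/2 ‖h‖² + ‖∇f(θ) − v‖ + ‖∇²f(θ) − U‖ ‖h‖ + ‖g_m‖`. Young's inequality
splits the mixed term into `M ‖h‖²` and `‖∇²f(θ) − U‖² / M`, and convexity of `x ↦ x^{3/2}`
separates the summands; the factor `(M/ρ)^{3/2}` is gained from `4 ≤ M/ρ`. For the curvature,
perturbing `U` to `∇²f(θ + h)` moves `λ_max` by at most `ρ ‖h‖ + ‖∇²f(θ) − U‖`, while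
`r* ≤ ‖h‖ + |‖h‖ − r*|`; convexity of the cube concludes.
-/

section TaylorBound

variable {E F : Type*} [NormedAddCommGroup E] [NormedSpace ℝ E]
  [NormedAddCommGroup F] [NormedSpace ℝ F]

theorem norm_sub_sub_fderiv_le_of_norm_fderiv_sub_le {f : E → F} {f' : E → E →L[ℝ] F} {x y : E}
    {C : ℝ} (hf : ∀ z ∈ segment ℝ x y, HasFDerivAt f (f' z) z)
    (hf' : ∀ z ∈ segment ℝ x y, ‖f' z - f' x‖ ≤ C * ‖z - x‖) :
    ‖f y - f x - f' x (y - x)‖ ≤ C / 2 * ‖y - x‖ ^ 2 := by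
  set γ : ℝ →ᵃ[ℝ] E := AffineMap.lineMap x y with hγ
  have γ_mem {t : ℝ} (ht : t ∈ Set.Icc (0 : ℝ) 1) : γ t ∈ segment ℝ x y :=
    lineMap_mem_segment ℝ x y ht
  have γ_sub (t : ℝ) : γ t - x = t • (y - x) := by simp [hγ, AffineMap.lineMap_apply]
  have remainder_deriv {t : ℝ} (ht : t ∈ Set.Icc (0 : ℝ) 1) :
      HasDerivAt (fun s ↦ f (γ s) - f x - f' x (γ s - x)) ((f' (γ t) - f' x) (y - x)) t := by
    have hγt : HasDerivAt γ (y - x) t := AffineMap.hasDerivAt_lineMap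
    exact (((hf _ (γ_mem ht)).comp_hasDerivAt t hγt).sub_const _).sub
      ((f' x).hasFDerivAt.comp_hasDerivAt t (hγt.sub_const x))
  have majorant_deriv (t : ℝ) :
      HasDerivAt (fun s ↦ C / 2 * ‖y - x‖ ^ 2 * s ^ 2) (C * t * ‖y - x‖ ^ 2) t :=
    ((hasDerivAt_pow 2 t).const_mul (C / 2 * ‖y - x‖ ^ 2)).congr_deriv (by push_cast; ring)
  have deriv_le {t : ℝ} (ht : t ∈ Set.Icc (0 : ℝ) 1) :
      ‖(f' (γ t) - f' x) (y - x)‖ ≤ C * t * ‖y - x‖ ^ 2 := by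
    calc ‖(f' (γ t) - f' x) (y - x)‖ ≤ C * ‖γ t - x‖ * ‖y - x‖ :=
          (f' (γ t) - f' x).le_of_opNorm_le (hf' _ (γ_mem ht)) _
      _ = C * t * ‖y - x‖ ^ 2 := by
          rw [γ_sub, norm_smul, Real.norm_of_nonneg ht.1]; ring
  simpa [hγ] using image_norm_le_of_norm_deriv_right_le_deriv_boundary
    (fun t ht ↦ (remainder_deriv ht).continuousAt.continuousWithinAt)
    (fun t ht ↦ (remainder_deriv (Set.Ico_subset_Icc_self ht)).hasDerivWithinAt)
    (by simp [hγ]) majorant_deriv (fun t ht ↦ deriv_le (Set.Ico_subset_Icc_self ht))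
    (Set.right_mem_Icc.2 zero_le_one)

end TaylorBound

section PowerInequalities

theorem sq_rpow_three_halves {x : ℝ} (hx : 0 ≤ x) : (x ^ 2) ^ ((3 : ℝ) / 2) = x ^ 3 := by
  rw [← Real.rpow_natCast, ← Real.rpow_mul hx, ← Real.rpow_natCast]
  norm_num

theorem rpow_three_halves_mul_self {x : ℝ} (hx : 0 ≤ x) :
    x ^ ((3 : ℝ) / 2) * x ^ ((3 : ℝ) / 2) = x ^ 3 := by
  rw [← Real.mul_rpow hx hx, ← sq, sq_rpow_three_halves hx]

theorem rpow_add_add_add_le {p a b c d : ℝ} (hp : 1 ≤ p) (ha : 0 ≤ a) (hb : 0 ≤ b) (hc : 0 ≤ c)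
    (hd : 0 ≤ d) :
    (a + b + c + d) ^ p ≤ 4 ^ (p - 1) * (a ^ p + b ^ p + c ^ p + d ^ p) := by
  have hnonneg : ∀ i ∈ Finset.univ, 0 ≤ ![a, b, c, d] i := by simp [Fin.forall_fin_succ, *]
  simpa [Fin.sum_univ_four] using
    Real.rpow_sum_le_const_mul_sum_rpow_of_nonneg Finset.univ hp hnonneg

theorem add_add_pow_three_le {a b c : ℝ} (ha : 0 ≤ a) (hb : 0 ≤ b) (hc : 0 ≤ c) :
    (a + b + c) ^ 3 ≤ 9 * (a ^ 3 + b ^ 3 + c ^ 3) := by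
  have hnonneg : ∀ i ∈ Finset.univ, 0 ≤ ![a, b, c] i := by simp [Fin.forall_fin_succ, *]
  have hmean := pow_sum_div_card_le_sum_pow hnonneg 2
  rw [div_le_iff₀' (by simp)] at hmean
  simpa [Fin.sum_univ_succ, ← add_assoc, show (3 : ℝ) ^ 2 = 9 by norm_num] using hmean

theorem mul_le_half_mul_sq_add_sq_div {M : ℝ} (hM : 0 < M) (x y : ℝ) :
    x * y ≤ (M * y ^ 2 + x ^ 2 / M) / 2 := by
  have hsq : 0 ≤ (M * y - x) ^ 2 / M := by positivity
  have hexpand : (M * y - x) ^ 2 / M = M * y ^ 2 - 2 * (x * y) + x ^ 2 / M := by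
    field_simp
    ring
  linarith

theorem rpow_three_halves_le_of_le_div_mul {ρ M G r a b c : ℝ} (hρ : 0 < ρ) (hM : 0 < M)
    (hG : 0 ≤ G) (hr : 0 ≤ r) (ha : 0 ≤ a) (hb : 0 ≤ b) (hc : 0 ≤ c)
    (hle : G ≤ M / ρ * (M * r ^ 2 + a + b ^ 2 / M + c)) :
    G ^ ((3 : ℝ) / 2) ≤
      2 * (M ^ 3 * ρ ^ (-(3 : ℝ) / 2) * r ^ 3 +
        M ^ ((3 : ℝ) / 2) * ρ ^ (-(3 : ℝ) / 2) * a ^ ((3 : ℝ) / 2) +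
        ρ ^ (-(3 : ℝ) / 2) * b ^ 3 +
        M ^ ((3 : ℝ) / 2) * ρ ^ (-(3 : ℝ) / 2) * c ^ ((3 : ℝ) / 2)) := by
  have hscale : (M / ρ) ^ ((3 : ℝ) / 2) = M ^ ((3 : ℝ) / 2) * ρ ^ (-(3 : ℝ) / 2) := by
    rw [Real.div_rpow hM.le hρ.le, neg_div, Real.rpow_neg hρ.le, div_eq_mul_inv]
  have hfour : (4 : ℝ) ^ ((3 : ℝ) / 2 - 1) = 2 := by
    rw [show (3 : ℝ) / 2 - 1 = 1 / 2 by norm_num, ← Real.sqrt_eq_rpow,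
      show (4 : ℝ) = 2 ^ 2 by norm_num, Real.sqrt_sq zero_le_two]
  have hjensen := rpow_add_add_add_le (p := (3 : ℝ) / 2) (by norm_num)
    (show 0 ≤ M * r ^ 2 by positivity) ha (show 0 ≤ b ^ 2 / M by positivity) hc
  rw [hfour] at hjensen
  calc G ^ ((3 : ℝ) / 2)
      ≤ (M / ρ * (M * r ^ 2 + a + b ^ 2 / M + c)) ^ ((3 : ℝ) / 2) := by gcongr
    _ = M ^ ((3 : ℝ) / 2) * ρ ^ (-(3 : ℝ) / 2) *
          (M * r ^ 2 + a + b ^ 2 / M + c) ^ ((3 : ℝ) / 2) := by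
        rw [Real.mul_rpow (by positivity) (by positivity), hscale]
    _ ≤ M ^ ((3 : ℝ) / 2) * ρ ^ (-(3 : ℝ) / 2) *
          (2 * ((M * r ^ 2) ^ ((3 : ℝ) / 2) + a ^ ((3 : ℝ) / 2) +
            (b ^ 2 / M) ^ ((3 : ℝ) / 2) + c ^ ((3 : ℝ) / 2))) := by
        gcongr
    _ = _ := by
        rw [Real.mul_rpow hM.le (by positivity), Real.div_rpow (by positivity) hM.le,
          sq_rpow_three_halves hr, sq_rpow_three_halves hb, ← rpow_three_halves_mul_self hM.le]
        field_simp

end PowerInequalities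

section Stationarity

variable {E : Type*} [NormedAddCommGroup E] [InnerProductSpace ℝ E]

theorem contDiff_gradient [CompleteSpace E] {f : E → ℝ} {n : WithTop ℕ∞}
    (hf : ContDiff ℝ (n + 1) f) : ContDiff ℝ n (gradient f) :=
  (InnerProductSpace.toDual ℝ E).symm.contDiff.comp (hf.fderiv_right le_rfl)

/-- The supremum of the quadratic form `⟪A w, w⟫` over the unit sphere: the largest eigenvalue when
`A` is symmetric and `E` is finite-dimensional. It is the junk value `sSup ∅ = 0` when `E` is
trivial. -/
noncomputable def lambdaMax (A : E →L[ℝ] E) : ℝ :=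
  sSup {l : ℝ | ∃ w : E, ‖w‖ = 1 ∧ l = ⟪A w, w⟫}

/-- The second-order stationarity measure `max (‖g‖^{3/2}) (λ_max(A)³ / ρ^{3/2})` of a point with
gradient `g` and Hessian `A`. -/
noncomputable def stationarityMeasure (ρ : ℝ) (g : E) (A : E →L[ℝ] E) : ℝ :=
  max (‖g‖ ^ ((3 : ℝ) / 2)) (lambdaMax A ^ 3 / ρ ^ ((3 : ℝ) / 2))

/-- The gradient at `h` of the cubic-regularized model
`x ↦ ⟪v, x⟫ + ⟪U x, x⟫ / 2 - M / 6 * ‖x‖ ^ 3`; the formula presupposes that `U` is symmetric. -/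
noncomputable def cubicModelGradient (M : ℝ) (v : E) (U : E →L[ℝ] E) (h : E) : E :=
  v + U h - (M / 2 * ‖h‖) • h

theorem inner_apply_self_le_opNorm (A : E →L[ℝ] E) {w : E} (hw : ‖w‖ = 1) : ⟪A w, w⟫ ≤ ‖A‖ := by
  calc ⟪A w, w⟫ ≤ ‖A w‖ * ‖w‖ := real_inner_le_norm _ _
    _ = ‖A w‖ := by rw [hw, mul_one]
    _ ≤ ‖A‖ := A.unit_le_opNorm w hw.le

theorem lambdaMax_le_add_norm_sub [Nontrivial E] {A U : E →L[ℝ] E} {c : ℝ}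
    (hU : ∀ w : E, ⟪U w, w⟫ ≤ c * ‖w‖ ^ 2) : lambdaMax A ≤ c + ‖A - U‖ := by
  obtain ⟨w₀, hw₀⟩ := exists_norm_eq E zero_le_one
  refine csSup_le ⟨_, w₀, hw₀, rfl⟩ ?_
  rintro _ ⟨w, hw, rfl⟩
  calc ⟪A w, w⟫ = ⟪U w, w⟫ + ⟪(A - U) w, w⟫ := by
        rw [sub_apply, inner_sub_left, add_sub_cancel]
    _ ≤ c + ‖A - U‖ := by
        gcongr
        · simpa [hw] using hU w
        · exact inner_apply_self_le_opNorm _ hw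

-- `g` and `A` play the role of gradient and Hessian at `θ`, and `g'` and `A'` those at `θ + h`.
variable {g g' v h : E} {A A' U : E →L[ℝ] E} {ρ M r : ℝ}

theorem norm_gradient_le_add_cubicModelGradient (hM : 0 ≤ M)
    (hg' : ‖g' - g - A h‖ ≤ ρ / 2 * ‖h‖ ^ 2) :
    ‖g'‖ ≤ ρ / 2 * ‖h‖ ^ 2 + ‖g - v‖ + ‖A - U‖ * ‖h‖ + ‖cubicModelGradient M v U h‖ +
      M / 2 * ‖h‖ ^ 2 := by
  have hdecomp : g' = (g' - g - A h) + (g - v) + (A - U) h + cubicModelGradient M v U h +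
      (M / 2 * ‖h‖) • h := by
    rw [cubicModelGradient, sub_apply]
    abel
  have hcubic : ‖(M / 2 * ‖h‖) • h‖ = M / 2 * ‖h‖ ^ 2 := by
    rw [norm_smul, Real.norm_of_nonneg (by positivity)]
    ring
  calc ‖g'‖ ≤ ‖g' - g - A h‖ + ‖g - v‖ + ‖(A - U) h‖ + ‖cubicModelGradient M v U h‖ +
        ‖(M / 2 * ‖h‖) • h‖ := by
        conv_lhs => rw [hdecomp]
        exact norm_add_le_of_le norm_add₄_le le_rfl
    _ ≤ _ := by
        gcongr
        · exact (A - U).le_opNorm h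
        · exact hcubic.le

theorem norm_gradient_rpow_le (hρ : 0 < ρ) (hM : 4 * ρ ≤ M)
    (hg' : ‖g' - g - A h‖ ≤ ρ / 2 * ‖h‖ ^ 2) :
    ‖g'‖ ^ ((3 : ℝ) / 2) ≤
      2 * (M ^ 3 * ρ ^ (-(3 : ℝ) / 2) * ‖h‖ ^ 3 +
        M ^ ((3 : ℝ) / 2) * ρ ^ (-(3 : ℝ) / 2) * ‖g - v‖ ^ ((3 : ℝ) / 2) +
        ρ ^ (-(3 : ℝ) / 2) * ‖A - U‖ ^ 3 +
        M ^ ((3 : ℝ) / 2) * ρ ^ (-(3 : ℝ) / 2) *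
          ‖cubicModelGradient M v U h‖ ^ ((3 : ℝ) / 2)) := by
  have hM₀ : 0 < M := by linarith
  refine rpow_three_halves_le_of_le_div_mul hρ hM₀ (norm_nonneg _) (norm_nonneg _) (norm_nonneg _)
    (norm_nonneg _) (norm_nonneg _) ?_
  have hyoung := mul_le_half_mul_sq_add_sq_div hM₀ ‖A - U‖ ‖h‖
  have hρM : ρ / 2 ≤ M / 8 := by linarith
  have hsmooth : ρ / 2 * ‖h‖ ^ 2 ≤ M / 8 * ‖h‖ ^ 2 := mul_le_mul_of_nonneg_right hρM (sq_nonneg _)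
  have hratio : 4 ≤ M / ρ := by rwa [le_div_iff₀ hρ]
  have hquad : 0 ≤ M * ‖h‖ ^ 2 := by positivity
  have hquot : 0 ≤ ‖A - U‖ ^ 2 / M := by positivity
  calc ‖g'‖ ≤ ρ / 2 * ‖h‖ ^ 2 + ‖g - v‖ + ‖A - U‖ * ‖h‖ + ‖cubicModelGradient M v U h‖ +
        M / 2 * ‖h‖ ^ 2 := norm_gradient_le_add_cubicModelGradient hM₀.le hg'
    _ ≤ 4 * (M * ‖h‖ ^ 2 + ‖g - v‖ + ‖A - U‖ ^ 2 / M + ‖cubicModelGradient M v U h‖) := by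
        linarith [norm_nonneg (g - v), norm_nonneg (cubicModelGradient M v U h)]
    _ ≤ _ := by gcongr

theorem lambdaMax_pow_three_le [Nontrivial E] (hρ : 0 < ρ) (hM : 4 * ρ ≤ M)
    (hA' : ‖A' - A‖ ≤ ρ * ‖h‖) (hU : ∀ w : E, ⟪U w, w⟫ ≤ M / 2 * r * ‖w‖ ^ 2) :
    lambdaMax A' ^ 3 ≤ 9 * (M ^ 3 * ‖h‖ ^ 3 + ‖A - U‖ ^ 3 + M ^ 3 * |‖h‖ - r| ^ 3) := by
  have hM₀ : 0 < M := by linarith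
  have hsmooth : ρ * ‖h‖ ≤ M / 4 * ‖h‖ := by gcongr; linarith
  have hradius : M / 2 * r ≤ M / 2 * (‖h‖ + |‖h‖ - r|) := by
    gcongr
    linarith [neg_abs_le (‖h‖ - r)]
  have hnonneg : 0 ≤ M * ‖h‖ := by positivity
  have hnonneg' : 0 ≤ M * |‖h‖ - r| := by positivity
  have hle : lambdaMax A' ≤ M * ‖h‖ + ‖A - U‖ + M * |‖h‖ - r| := by
    calc lambdaMax A' ≤ M / 2 * r + ‖A' - U‖ := lambdaMax_le_add_norm_sub hU
      _ ≤ M / 2 * r + (‖A' - A‖ + ‖A - U‖) := by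
          gcongr
          exact norm_sub_le_norm_sub_add_norm_sub _ _ _
      _ ≤ _ := by linarith
  calc lambdaMax A' ^ 3 ≤ (M * ‖h‖ + ‖A - U‖ + M * |‖h‖ - r|) ^ 3 :=
        (Odd.strictMono_pow (by decide : Odd 3)).monotone hle
    _ ≤ 9 * ((M * ‖h‖) ^ 3 + ‖A - U‖ ^ 3 + (M * |‖h‖ - r|) ^ 3) :=
        add_add_pow_three_le hnonneg (norm_nonneg _) hnonneg'
    _ = _ := by rw [mul_pow, mul_pow]

theorem stationarityMeasure_le [Nontrivial E] (hρ : 0 < ρ) (hM : 4 * ρ ≤ M)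
    (hg' : ‖g' - g - A h‖ ≤ ρ / 2 * ‖h‖ ^ 2) (hA' : ‖A' - A‖ ≤ ρ * ‖h‖)
    (hU : ∀ w : E, ⟪U w, w⟫ ≤ M / 2 * r * ‖w‖ ^ 2) :
    stationarityMeasure ρ g' A' ≤
      9 * (M ^ 3 * ρ ^ (-(3 : ℝ) / 2) * ‖h‖ ^ 3 +
        M ^ ((3 : ℝ) / 2) * ρ ^ (-(3 : ℝ) / 2) * ‖g - v‖ ^ ((3 : ℝ) / 2) +
        ρ ^ (-(3 : ℝ) / 2) * ‖A - U‖ ^ 3 +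
        M ^ ((3 : ℝ) / 2) * ρ ^ (-(3 : ℝ) / 2) *
          ‖cubicModelGradient M v U h‖ ^ ((3 : ℝ) / 2) +
        M ^ 3 * ρ ^ (-(3 : ℝ) / 2) * |‖h‖ - r| ^ 3) := by
  have hM₀ : 0 < M := by linarith
  refine max_le ?_ ?_
  · have hradius : 0 ≤ M ^ 3 * ρ ^ (-(3 : ℝ) / 2) * |‖h‖ - r| ^ 3 := by positivity
    refine (norm_gradient_rpow_le (v := v) (U := U) hρ hM hg').trans ?_
    exact mul_le_mul (by norm_num) (le_add_of_nonneg_right hradius) (by positivity) (by norm_num)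
  · have hgrad : 0 ≤ M ^ ((3 : ℝ) / 2) * ρ ^ (-(3 : ℝ) / 2) * ‖g - v‖ ^ ((3 : ℝ) / 2) := by
      positivity
    have hmodel : 0 ≤ M ^ ((3 : ℝ) / 2) * ρ ^ (-(3 : ℝ) / 2) *
        ‖cubicModelGradient M v U h‖ ^ ((3 : ℝ) / 2) := by positivity
    calc lambdaMax A' ^ 3 / ρ ^ ((3 : ℝ) / 2) = lambdaMax A' ^ 3 * ρ ^ (-(3 : ℝ) / 2) := by
          rw [neg_div, Real.rpow_neg hρ.le, div_eq_mul_inv]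
      _ ≤ 9 * (M ^ 3 * ‖h‖ ^ 3 + ‖A - U‖ ^ 3 + M ^ 3 * |‖h‖ - r| ^ 3) * ρ ^ (-(3 : ℝ) / 2) := by
          gcongr
          exact lambdaMax_pow_three_le hρ hM hA' hU
      _ ≤ _ := by linarith

/-- The vector field `G` with derivative `H` plays the role of `∇f` and `∇²f`. -/
theorem sosp_measure_bound_at_updated_point_general [Nontrivial E] {θ : E} {G : E → E}
    {H : E → E →L[ℝ] E} (hρ : 0 < ρ) (hG : ∀ x ∈ segment ℝ θ (θ + h), HasFDerivAt G (H x) x)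
    (hH : ∀ x ∈ segment ℝ θ (θ + h), ‖H x - H θ‖ ≤ ρ * ‖x - θ‖) (hM : 4 * ρ ≤ M)
    (hU : ∀ w : E, ⟪U w, w⟫ ≤ M / 2 * r * ‖w‖ ^ 2) :
    stationarityMeasure ρ (G (θ + h)) (H (θ + h)) ≤
      9 * (M ^ 3 * ρ ^ (-(3 : ℝ) / 2) * ‖h‖ ^ 3 +
        M ^ ((3 : ℝ) / 2) * ρ ^ (-(3 : ℝ) / 2) * ‖G θ - v‖ ^ ((3 : ℝ) / 2) +
        ρ ^ (-(3 : ℝ) / 2) * ‖H θ - U‖ ^ 3 +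
        M ^ ((3 : ℝ) / 2) * ρ ^ (-(3 : ℝ) / 2) *
          ‖cubicModelGradient M v U h‖ ^ ((3 : ℝ) / 2) +
        M ^ 3 * ρ ^ (-(3 : ℝ) / 2) * |‖h‖ - r| ^ 3) := by
  have htaylor : ‖G (θ + h) - G θ - H θ h‖ ≤ ρ / 2 * ‖h‖ ^ 2 := by
    simpa using norm_sub_sub_fderiv_le_of_norm_fderiv_sub_le hG hH
  have hhess : ‖H (θ + h) - H θ‖ ≤ ρ * ‖h‖ := by simpa using hH _ (right_mem_segment ℝ _ _)
  exact stationarityMeasure_le hρ hM htaylor hhess hU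

end Stationarity

/-- Second-order stationarity measure bound at the updated point: with
`μ(x) = max(‖∇f(x)‖^{3/2}, λ_max(∇²f(x))³/ρ^{3/2})`, `M ≥ 4ρ`, `r* ≥ 0`,
`⟨U w, w⟩ ≤ (M/2)·r*·‖w‖²` for all `w`, and `g_m = v + U h − (M/2)·‖h‖·h`, one has
`μ(θ + h) ≤ 9·(M³·ρ^{−3/2}·‖h‖³ + M^{3/2}·ρ^{−3/2}·‖∇f(θ) − v‖^{3/2}
  + ρ^{−3/2}·‖∇²f(θ) − U‖³ + M^{3/2}·ρ^{−3/2}·‖g_m‖^{3/2} + M³·ρ^{−3/2}·|‖h‖ − r*|³)`. -/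
theorem sosp_measure_bound_at_updated_point
    (d : ℕ) (hd : 1 ≤ d)
    (f : EuclideanSpace ℝ (Fin d) → ℝ) (hf : ContDiff ℝ 2 f)
    (ρ : ℝ) (hρ : 0 < ρ)
    (hLip : ∀ x y : EuclideanSpace ℝ (Fin d),
      ‖fderiv ℝ (gradient f) x - fderiv ℝ (gradient f) y‖ ≤ ρ * ‖x - y‖)
    (lamMax : EuclideanSpace ℝ (Fin d) → ℝ)
    (hlamMax : ∀ x, lamMax x = sSup {l : ℝ | ∃ w : EuclideanSpace ℝ (Fin d), ‖w‖ = 1 ∧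
        l = ⟪(fderiv ℝ (gradient f) x) w, w⟫})
    (μ : EuclideanSpace ℝ (Fin d) → ℝ)
    (hμ : ∀ x, μ x = max (‖gradient f x‖ ^ ((3 : ℝ) / 2))
        ((lamMax x) ^ 3 / ρ ^ ((3 : ℝ) / 2)))
    (θ h v : EuclideanSpace ℝ (Fin d))
    (rstar : ℝ) (hrstar : 0 ≤ rstar)
    (M : ℝ) (hM : 4 * ρ ≤ M)
    (U : EuclideanSpace ℝ (Fin d) →L[ℝ] EuclideanSpace ℝ (Fin d))
    (hU : ∀ w : EuclideanSpace ℝ (Fin d), ⟪U w, w⟫ ≤ M / 2 * rstar * ‖w‖ ^ 2)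
    (gm : EuclideanSpace ℝ (Fin d))
    (hgm : gm = v + U h - (M / 2 * ‖h‖) • h) :
    μ (θ + h) ≤
      9 * (M ^ 3 * ρ ^ (-(3 : ℝ) / 2) * ‖h‖ ^ 3 +
        M ^ ((3 : ℝ) / 2) * ρ ^ (-(3 : ℝ) / 2) * ‖gradient f θ - v‖ ^ ((3 : ℝ) / 2) +
        ρ ^ (-(3 : ℝ) / 2) * ‖fderiv ℝ (gradient f) θ - U‖ ^ 3 +
        M ^ ((3 : ℝ) / 2) * ρ ^ (-(3 : ℝ) / 2) * ‖gm‖ ^ ((3 : ℝ) / 2) +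
        M ^ 3 * ρ ^ (-(3 : ℝ) / 2) * |‖h‖ - rstar| ^ 3) := by
  have : Nonempty (Fin d) := ⟨⟨0, hd⟩⟩
  rw [hμ, hlamMax, hgm]
  exact sosp_measure_bound_at_updated_point_general hρ
    (fun x _ ↦ ((contDiff_gradient hf).differentiable one_ne_zero x).hasFDerivAt)
    (fun x _ ↦ hLip x θ) hM hU
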